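/- arXiv:1307.2081 — 3 statements merged into one kernel-verified Lean document; each statement's English description precedes it below -/
import Mathlib

section
/- Let 0 ≤ r ≤ 1/2, t ≥ 0, and let G = exp(t • A(r)). Then the entries of G satisfy: |G₁₁| ≤ 2(e^{−r²t/4} + r²·e^{−3t/4}), |G₁₂| ≤ 2r(e^{−r²t/4} + e^{−3t/4}), |G₂₁| ≤ 2r(e^{−r²t/4} + e^{−3t/4}), and |G₂₂| ≤ 2(r²·e^{−r²t/4} + e^{−3t/4}). -/
/-- The Fourier symbol (at frequency radius `r`) of the linearized damped Euler system. -/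
noncomputable def Amat (r : ℝ) : Matrix (Fin 2) (Fin 2) ℝ := !![0, -r; r, -1]

/-!
Write the eigenvalues of `A(r)` as `-a` and `-b`, with `0 ≤ a ≤ b`, `a + b = 1` and `a * b = r ^ 2`.
By the Cayley–Hamilton theorem, Newton interpolation of `exp` at `-a * t` and `-b * t` gives
`exp (t • A) = e^{-at} • 1 + S • (A + a • 1)`, where `S = (e^{-at} - e^{-bt}) / (b - a)`; read as a
divided difference, `S` also makes sense at the double eigenvalue `r = 1/2`, so that no limiting
argument is needed there. The four bounds then follow from three scalar ones: `e^{-at}` is at most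
`E = e^{-abt/4}`, `e^{-bt}` is at most a convex combination of `E` and `e^{-3t/4}`, and
`S ≤ 2 * b * E`.
-/

lemma pow_succ_eq_pow_smul_of_mul_self_eq_smul {R M : Type*} [CommSemiring R] [Semiring M]
    [Algebra R M] {N : M} {δ : R} (hN : N * N = δ • N) (n : ℕ) : N ^ (n + 1) = δ ^ n • N := by
  induction n with
  | zero => simp
  | succ n ih => rw [pow_succ, ih, smul_mul_assoc, hN, smul_smul, pow_succ]

section NewtonInterpolation

variable {𝕜 𝔸 : Type*} [RCLike 𝕜] [NormedRing 𝔸] [NormedAlgebra 𝕜 𝔸] [CompleteSpace 𝔸]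

lemma hasSum_dslope_exp_zero (δ : 𝕜) :
    HasSum (fun n : ℕ => ((n + 1).factorial : 𝕜)⁻¹ * δ ^ n) (dslope NormedSpace.exp 0 δ) := by
  rcases eq_or_ne δ 0 with rfl | hδ
  · rw [dslope_same, hasDerivAt_exp_zero.deriv]
    simpa using hasSum_single (f := fun n : ℕ => ((n + 1).factorial : 𝕜)⁻¹ * 0 ^ n) 0
      fun n hn => by simp [hn]
  · have htail := (hasSum_nat_add_iff' 1).2 (NormedSpace.exp_series_hasSum_exp' (𝕂 := 𝕜) δ)
    have hterm (n : ℕ) : ((n + 1).factorial : 𝕜)⁻¹ * δ ^ n =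
        δ⁻¹ * ((n + 1).factorial : 𝕜)⁻¹ • δ ^ (n + 1) := by
      rw [smul_eq_mul, pow_succ]
      field_simp
    have hslope : dslope NormedSpace.exp 0 δ = δ⁻¹ * (NormedSpace.exp δ - 1) := by
      simp [dslope_of_ne _ hδ, slope_def_field, div_eq_inv_mul]
    simpa only [hterm, hslope, Finset.sum_range_one, Nat.factorial_zero, Nat.cast_one, inv_one,
      pow_zero, one_smul] using htail.mul_left δ⁻¹

lemma exp_eq_one_add_dslope_smul_of_mul_self_eq_smul {N : 𝔸} {δ : 𝕜} (hN : N * N = δ • N) :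
    NormedSpace.exp N = 1 + dslope NormedSpace.exp 0 δ • N := by
  refine (NormedSpace.exp_series_hasSum_exp' (𝕂 := 𝕜) N).unique ((hasSum_nat_add_iff' 1).1 ?_)
  simpa [pow_succ_eq_pow_smul_of_mul_self_eq_smul hN, smul_smul] using
    (hasSum_dslope_exp_zero δ).smul_const N

lemma dslope_exp_eq_exp_mul (x y : 𝕜) :
    dslope NormedSpace.exp x y = NormedSpace.exp x * dslope NormedSpace.exp 0 (y - x) := by
  rcases eq_or_ne y x with rfl | hyx
  · simp [(hasDerivAt_exp (𝕂 := 𝕜)).deriv]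
  · rw [dslope_of_ne _ hyx, dslope_of_ne _ (sub_ne_zero.2 hyx)]
    have hexp : NormedSpace.exp y = NormedSpace.exp x * NormedSpace.exp (y - x) := by
      rw [← NormedSpace.exp_add, add_sub_cancel]
    simp only [slope_def_field, hexp, sub_zero, NormedSpace.exp_zero]
    ring

theorem exp_eq_newton_interpolation {A : 𝔸} {x y : 𝕜} (h : (A - x • 1) * (A - y • 1) = 0) :
    NormedSpace.exp A =
      NormedSpace.exp x • 1 + dslope NormedSpace.exp x y • (A - x • 1) := by
  let : NormedAlgebra ℚ 𝔸 := NormedAlgebra.restrictScalars ℚ 𝕜 𝔸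
  have hsq : (A - x • 1) * (A - x • 1) = (y - x) • (A - x • 1) := by
    rw [← sub_eq_zero, ← h, sub_smul]
    simp only [mul_sub, mul_smul_comm, mul_one]
    abel
  have hscalar : NormedSpace.exp (x • (1 : 𝔸)) = NormedSpace.exp x • 1 := by
    simp only [← Algebra.algebraMap_eq_smul_one, NormedSpace.algebraMap_exp_comm]
  have hcomm : Commute (x • (1 : 𝔸)) (A - x • 1) := (Commute.one_left _).smul_left x
  calc NormedSpace.exp A = NormedSpace.exp (x • 1) * NormedSpace.exp (A - x • 1) := by
        rw [← NormedSpace.exp_add_of_commute hcomm, add_sub_cancel]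
    _ = NormedSpace.exp x • (1 + dslope NormedSpace.exp 0 (y - x) • (A - x • 1)) := by
        rw [hscalar, exp_eq_one_add_dslope_smul_of_mul_self_eq_smul hsq, smul_one_mul]
    _ = _ := by rw [smul_add, smul_smul, ← dslope_exp_eq_exp_mul]

end NewtonInterpolation

lemma dslope_nonneg_of_monotone {f : ℝ → ℝ} (hf : Monotone f) (x y : ℝ) :
    0 ≤ dslope f x y := by
  rcases eq_or_ne y x with rfl | hyx
  · rw [dslope_same]
    exact hf.deriv_nonneg
  · rw [dslope_of_ne _ hyx]
    exact (hf.monotoneOn Set.univ).slope_nonneg trivial trivial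

lemma dslope_exp_zero_neg_le {u : ℝ} (hu : 0 ≤ u) : dslope Real.exp 0 (-u) ≤ 2 / (2 + u) := by
  rcases hu.eq_or_lt with rfl | hu
  · simp
  · have hexp := Real.exp_pos u
    -- This is `tanh (u / 2) ≤ u / 2`, obtained from `log` at `1 + (e^u - 1)`.
    have hlog : 2 * (Real.exp u - 1) ≤ u * (Real.exp u + 1) := by
      have h := Real.le_log_one_add_of_nonneg (sub_nonneg.2 (Real.one_le_exp hu.le))
      rw [add_sub_cancel, Real.log_exp, div_le_iff₀ (by linarith)] at h
      linarith
    rw [dslope_of_ne _ (neg_ne_zero.2 hu.ne'), slope_def_field, Real.exp_zero, Real.exp_neg,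
      sub_zero, ← neg_div_neg_eq, neg_neg, neg_sub, div_le_div_iff₀ hu (by linarith)]
    refine le_of_mul_le_mul_left ?_ hexp
    have hinv : Real.exp u * (Real.exp u)⁻¹ = 1 := mul_inv_cancel₀ hexp.ne'
    linear_combination hlog - (2 + u) * hinv

lemma quadratic_nonneg_of_sq_le {K : Type*} [Field K] [LinearOrder K] [IsStrictOrderedRing K]
    {A B C : K} (hA : 0 < A) (h : B ^ 2 ≤ 4 * A * C) (t : K) :
    0 ≤ A - B * t + C * t ^ 2 := by
  refine nonneg_of_mul_nonneg_right (a := 4 * A) ?_ (by linarith)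
  linarith [sq_nonneg (2 * A - B * t), mul_le_mul_of_nonneg_right h (sq_nonneg t)]

-- Replacing `exp` by its quadratic Taylor polynomial leaves a cubic in `t`, whose leading
-- coefficient is nonnegative and whose quadratic part has nonpositive discriminant.
lemma le_mul_two_add_mul_mul_exp {a b t : ℝ} (ha : 0 ≤ a) (hab : a ≤ b) (hsum : a + b = 1)
    (ht : 0 ≤ t) : t ≤ b * (2 + (b - a) * t) * Real.exp ((a - a * b / 4) * t) := by
  obtain ⟨d, rfl⟩ : ∃ d, b = (1 + d) / 2 := ⟨2 * b - 1, by ring⟩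
  obtain rfl : a = (1 - d) / 2 := by linarith
  have hd₀ : 0 ≤ d := by linarith
  have hd₁ : 0 ≤ 1 - d := by linarith
  have hgap : (1 + d) / 2 - (1 - d) / 2 = d := by ring
  obtain ⟨α, hα⟩ : ∃ α, α = (1 - d) * (7 - d) / 16 := ⟨_, rfl⟩
  have hrate : (1 - d) / 2 - (1 - d) / 2 * ((1 + d) / 2) / 4 = α := by rw [hα]; ring
  have hα₀ : 0 ≤ α := by rw [hα]; nlinarith
  rw [hgap, hrate]
  have hdiscrim : ((1 - d) * (9 + 2 * d + d ^ 2) / 16) ^ 2 ≤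
      4 * (1 + d) * ((1 + d) * α * (α + d) / 2) := by
    have hfactor : (1 - d) * (9 + 2 * d + d ^ 2) ^ 2 ≤ 2 * (1 + d) ^ 3 * (49 - d ^ 2) :=
      have hd₂ : d ^ 2 ≤ d := by nlinarith
      calc (1 - d) * (9 + 2 * d + d ^ 2) ^ 2 ≤ (1 - d) * (9 + 2 * d + d) ^ 2 := by gcongr
        _ ≤ 2 * 1 ^ 3 * 48 := by nlinarith
        _ ≤ 2 * (1 + d) ^ 3 * (49 - d ^ 2) := by gcongr <;> linarith
    rw [hα]
    linarith [mul_le_mul_of_nonneg_left hfactor hd₁]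
  have hquad := quadratic_nonneg_of_sq_le (by linarith) hdiscrim t
  have hcubic : 0 ≤ (1 + d) * d * α ^ 2 * t ^ 3 / 4 := by positivity
  calc t ≤ (1 + d) / 2 * (2 + d * t) * (1 + α * t + (α * t) ^ 2 / 2) := by
        linear_combination hquad + hcubic - (1 + d) * t * hα
    _ ≤ (1 + d) / 2 * (2 + d * t) * Real.exp (α * t) := by
        gcongr
        exact Real.quadratic_le_exp_of_nonneg (by positivity)

/-- The convolution `∫₀ᵗ e^{-a(t-s)} e^{-bs} ds` of two exponential decays of rates `a` and `b`, in
terms of which the entries of the Green matrix are expressed. It equals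
`(e^{-at} - e^{-bt}) / (b - a)` for `a ≠ b` and `t * e^{-at}` for `a = b`; the encoding by `dslope`
covers both cases. -/
noncomputable def expConv (a b t : ℝ) : ℝ := t * dslope Real.exp (-a * t) (-b * t)

lemma sub_mul_expConv (a b t : ℝ) :
    (b - a) * expConv a b t = Real.exp (-a * t) - Real.exp (-b * t) := by
  have h := sub_smul_dslope Real.exp (-a * t) (-b * t)
  rw [smul_eq_mul] at h
  rw [expConv]
  linear_combination -h

lemma expConv_nonneg (a b : ℝ) {t : ℝ} (ht : 0 ≤ t) : 0 ≤ expConv a b t :=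
  mul_nonneg ht (dslope_nonneg_of_monotone Real.exp_monotone _ _)

lemma expConv_le_exp_mul_div {a b t : ℝ} (hab : a ≤ b) (ht : 0 ≤ t) :
    expConv a b t ≤ Real.exp (-a * t) * (2 * t / (2 + (b - a) * t)) := by
  have hgap : 0 ≤ (b - a) * t := mul_nonneg (sub_nonneg.2 hab) ht
  calc expConv a b t = t * (Real.exp (-a * t) * dslope Real.exp 0 (-((b - a) * t))) := by
        rw [expConv, Real.exp_eq_exp_ℝ, dslope_exp_eq_exp_mul]
        ring_nf
    _ ≤ t * (Real.exp (-a * t) * (2 / (2 + (b - a) * t))) := by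
        gcongr
        exact dslope_exp_zero_neg_le hgap
    _ = Real.exp (-a * t) * (2 * t / (2 + (b - a) * t)) := by ring

lemma expConv_le {a b t : ℝ} (ha : 0 ≤ a) (hab : a ≤ b) (hsum : a + b = 1) (ht : 0 ≤ t) :
    expConv a b t ≤ 2 * b * Real.exp (-(a * b) * t / 4) := by
  have hgap : 0 ≤ (b - a) * t := mul_nonneg (sub_nonneg.2 hab) ht
  refine (expConv_le_exp_mul_div hab ht).trans ?_
  rw [← mul_div_assoc, div_le_iff₀ (by linarith)]
  calc Real.exp (-a * t) * (2 * t)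
      ≤ Real.exp (-a * t) *
          (2 * (b * (2 + (b - a) * t) * Real.exp ((a - a * b / 4) * t))) := by
        gcongr
        exact le_mul_two_add_mul_mul_exp ha hab hsum ht
    _ = 2 * b * (Real.exp (-a * t) * Real.exp ((a - a * b / 4) * t)) * (2 + (b - a) * t) := by
        ring
    _ = 2 * b * Real.exp (-(a * b) * t / 4) * (2 + (b - a) * t) := by
        rw [← Real.exp_add]
        ring_nf

lemma exp_neg_mul_le {a b t : ℝ} (ha : 0 ≤ a) (hb : b ≤ 4) (ht : 0 ≤ t) :
    Real.exp (-a * t) ≤ Real.exp (-(a * b) * t / 4) := by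
  have h : 0 ≤ (a * t) * (4 - b) := mul_nonneg (mul_nonneg ha ht) (sub_nonneg.2 hb)
  exact Real.exp_le_exp.2 (by linarith)

lemma exp_neg_mul_le_convex_comb {a b t : ℝ} (ha : 0 ≤ a) (hab : a ≤ b) (hsum : a + b = 1)
    (ht : 0 ≤ t) :
    Real.exp (-b * t) ≤ 2 * (a * b) * Real.exp (-(a * b) * t / 4) +
      (1 - 2 * (a * b)) * Real.exp (-3 * t / 4) := by
  have hab₀ : 0 ≤ a * b := mul_nonneg ha (ha.trans hab)
  have hab₁ : a * b ≤ 1 / 4 := by nlinarith [sq_nonneg (b - a)]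
  have hrate : 2 * (a * b) * (a * b / 4) + (1 - 2 * (a * b)) * (3 / 4) ≤ b := by
    obtain rfl : a = 1 - b := by linarith
    nlinarith
  have hconv := convexOn_exp.2 (Set.mem_univ (-(a * b) * t / 4)) (Set.mem_univ (-3 * t / 4))
    (by linarith : 0 ≤ 2 * (a * b)) (by linarith : 0 ≤ 1 - 2 * (a * b)) (by ring)
  refine le_trans (Real.exp_le_exp.2 ?_) hconv
  simp only [smul_eq_mul]
  nlinarith

lemma smul_Amat_sub_smul_one (r c t : ℝ) :
    t • Amat r - (-c * t) • 1 = t • !![c, -r; r, c - 1] := by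
  ext i j
  fin_cases i <;> fin_cases j <;> simp [Amat] <;> ring

theorem exp_smul_Amat {a b r : ℝ} (hsum : a + b = 1) (hprod : a * b = r ^ 2) (t : ℝ) :
    NormedSpace.exp (t • Amat r) =
      !![Real.exp (-a * t) + a * expConv a b t, -(r * expConv a b t);
        r * expConv a b t, Real.exp (-b * t) - a * expConv a b t] := by
  let : NormedRing (Matrix (Fin 2) (Fin 2) ℝ) := Matrix.linftyOpNormedRing
  let : NormedAlgebra ℝ (Matrix (Fin 2) (Fin 2) ℝ) := Matrix.linftyOpNormedAlgebra
  obtain rfl : b = 1 - a := by linarith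
  have hcayley : (t • Amat r - (-a * t) • 1) * (t • Amat r - (-(1 - a) * t) • 1) = 0 := by
    have hzero : !![a, -r; r, a - 1] * !![1 - a, -r; r, 1 - a - 1] = 0 := by
      ext i j
      fin_cases i <;> fin_cases j <;> simp <;> linarith
    rw [smul_Amat_sub_smul_one, smul_Amat_sub_smul_one, smul_mul_smul_comm, hzero, smul_zero]
  have hconv : dslope Real.exp (-a * t) (-(1 - a) * t) * t = expConv a (1 - a) t := mul_comm _ _
  have hmode := sub_mul_expConv a (1 - a) t
  refine (exp_eq_newton_interpolation hcayley).trans ?_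
  rw [← Real.exp_eq_exp_ℝ, smul_Amat_sub_smul_one, smul_smul, hconv]
  ext i j
  fin_cases i <;> fin_cases j <;> simp at hmode ⊢ <;> linarith

lemma exists_add_eq_one_mul_eq {p : ℝ} (hp₀ : 0 ≤ p) (hp₁ : p ≤ 1 / 4) :
    ∃ a b : ℝ, 0 ≤ a ∧ a ≤ b ∧ a + b = 1 ∧ a * b = p := by
  have hsq : √(1 - 4 * p) ^ 2 = 1 - 4 * p := Real.sq_sqrt (by linarith)
  have hle : √(1 - 4 * p) ≤ 1 := Real.sqrt_le_one.2 (by linarith)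
  refine ⟨(1 - √(1 - 4 * p)) / 2, (1 + √(1 - 4 * p)) / 2, ?_, ?_, ?_, ?_⟩ <;>
    linarith [Real.sqrt_nonneg (1 - 4 * p)]

theorem stmt3 (r : ℝ) (hr0 : 0 ≤ r) (hr1 : r ≤ 1/2) (t : ℝ) (ht : 0 ≤ t) :
    |NormedSpace.exp (t • Amat r) 0 0| ≤
        2 * (Real.exp (-r^2 * t / 4) + r^2 * Real.exp (-3 * t / 4)) ∧
    |NormedSpace.exp (t • Amat r) 0 1| ≤
        2 * r * (Real.exp (-r^2 * t / 4) + Real.exp (-3 * t / 4)) ∧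
    |NormedSpace.exp (t • Amat r) 1 0| ≤
        2 * r * (Real.exp (-r^2 * t / 4) + Real.exp (-3 * t / 4)) ∧
    |NormedSpace.exp (t • Amat r) 1 1| ≤
        2 * (r^2 * Real.exp (-r^2 * t / 4) + Real.exp (-3 * t / 4)) := by
  obtain ⟨a, b, ha, hab, hsum, hprod⟩ :=
    exists_add_eq_one_mul_eq (sq_nonneg r) (by nlinarith : r ^ 2 ≤ 1 / 4)
  have hslow := exp_neg_mul_le ha (by linarith : b ≤ 4) ht
  have hfast := exp_neg_mul_le_convex_comb ha hab hsum ht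
  have hconv := expConv_le ha hab hsum ht
  have hconv₀ := expConv_nonneg a b ht
  rw [hprod] at hslow hfast hconv
  rw [exp_smul_Amat hsum hprod]
  simp only [Matrix.of_apply, Matrix.cons_val_zero, Matrix.cons_val_one, Matrix.cons_val', abs_neg]
  have haS : a * expConv a b t ≤ 2 * (r ^ 2 * Real.exp (-r ^ 2 * t / 4)) := by
    rw [← hprod] at hconv ⊢
    linarith [mul_le_mul_of_nonneg_left hconv ha]
  have hrS : |r * expConv a b t| ≤ 2 * r * (Real.exp (-r ^ 2 * t / 4) + Real.exp (-3 * t / 4)) := by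
    rw [abs_of_nonneg (by positivity), mul_comm 2, mul_assoc]
    gcongr
    nlinarith [Real.exp_pos (-r ^ 2 * t / 4), Real.exp_pos (-3 * t / 4)]
  have hF := Real.exp_pos (-3 * t / 4)
  refine ⟨?_, hrS, hrS, abs_le.2 ⟨?_, ?_⟩⟩
  · rw [abs_of_nonneg (by positivity)]
    nlinarith [Real.exp_pos (-r ^ 2 * t / 4)]
  · linarith [Real.exp_pos (-b * t)]
  · nlinarith
end

section
/- There exist constants C > 0 and c > 0 such that for every real r ≥ 1/2 and every t ≥ 0, every entry of the matrix exponential exp(t • A(r)) has absolute value at most C·e^{−ct}. -/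
/-!
The Euclidean energy `x² + y²` of a solution of `du/dt = A(r) u` dissipates only through the damped
component `y`. The cross term of the energy `x² + y² - 2 b x y`, with `b = r / (2 (1 + r²))`,
transfers part of that dissipation to `x`: this energy stays comparable to the Euclidean one
uniformly in `r`, and it decays at the rate `r² / (2 (1 + r²))`, which is bounded below as soon as
`r` stays away from `0`.
-/

open Matrix

theorem le_mul_exp_of_hasDerivAt_le {f f' : ℝ → ℝ} {K : ℝ} (hf : ∀ s, HasDerivAt f (f' s) s)
    (hK : ∀ s, f' s ≤ K * f s) {t : ℝ} (ht : 0 ≤ t) : f t ≤ f 0 * Real.exp (K * t) := by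
  have gronwall := le_gronwallBound_of_liminf_deriv_right_le (ε := 0)
    (fun s _ ↦ (hf s).continuousAt.continuousWithinAt)
    (fun s _ _ hr ↦ (hf s).hasDerivWithinAt.liminf_right_slope_le hr) (le_refl (f 0))
    (fun s _ ↦ (hK s).trans_eq (add_zero _).symm) t ⟨ht, le_rfl⟩
  rwa [gronwallBound_ε0, sub_zero] at gronwall

section Lyapunov

open scoped RealInnerProductSpace

variable {E : Type*} [NormedAddCommGroup E] [InnerProductSpace ℝ E] {A P : E →L[ℝ] E}
  {α β κ t : ℝ}

theorem inner_map_le_mul_exp_of_lyapunov {u : ℝ → E} (hu : ∀ s, HasDerivAt u (A (u s)) s)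
    (hκ : ∀ x, ⟪x, P (A x)⟫ + ⟪A x, P x⟫ ≤ -κ * ⟪x, P x⟫) (ht : 0 ≤ t) :
    ⟪u t, P (u t)⟫ ≤ ⟪u 0, P (u 0)⟫ * Real.exp (-κ * t) :=
  le_mul_exp_of_hasDerivAt_le
    (fun s ↦ (hu s).inner ℝ (P.hasFDerivAt.comp_hasDerivAt s (hu s))) (fun s ↦ hκ (u s)) ht

theorem norm_le_sqrt_mul_exp_of_lyapunov {u : ℝ → E} (hu : ∀ s, HasDerivAt u (A (u s)) s)
    (hα₀ : 0 < α) (hα : ∀ x, α * ‖x‖ ^ 2 ≤ ⟪x, P x⟫) (hβ : ∀ x, ⟪x, P x⟫ ≤ β * ‖x‖ ^ 2)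
    (hκ : ∀ x, ⟪x, P (A x)⟫ + ⟪A x, P x⟫ ≤ -κ * ⟪x, P x⟫) (ht : 0 ≤ t) :
    ‖u t‖ ≤ √(β / α) * Real.exp (-κ * t / 2) * ‖u 0‖ := by
  have energy_le : α * ‖u t‖ ^ 2 ≤ β * ‖u 0‖ ^ 2 * Real.exp (-κ * t) :=
    calc α * ‖u t‖ ^ 2 ≤ ⟪u t, P (u t)⟫ := hα _
      _ ≤ ⟪u 0, P (u 0)⟫ * Real.exp (-κ * t) := inner_map_le_mul_exp_of_lyapunov hu hκ ht
      _ ≤ β * ‖u 0‖ ^ 2 * Real.exp (-κ * t) := by gcongr; exact hβ _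
  have sq_le : ‖u t‖ ^ 2 ≤ β / α * Real.exp (-κ * t) * ‖u 0‖ ^ 2 := by
    rw [div_mul_eq_mul_div, div_mul_eq_mul_div, le_div_iff₀ hα₀]
    linarith
  calc ‖u t‖ ≤ √(β / α * Real.exp (-κ * t) * ‖u 0‖ ^ 2) := Real.le_sqrt_of_sq_le sq_le
    _ = √(β / α) * Real.exp (-κ * t / 2) * ‖u 0‖ := by
      rw [Real.sqrt_mul' _ (sq_nonneg _), Real.sqrt_mul' _ (Real.exp_nonneg _),
        Real.sqrt_sq (norm_nonneg _), Real.exp_half]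

theorem norm_exp_smul_le_of_lyapunov [CompleteSpace E]
    (hα₀ : 0 < α) (hα : ∀ x, α * ‖x‖ ^ 2 ≤ ⟪x, P x⟫) (hβ : ∀ x, ⟪x, P x⟫ ≤ β * ‖x‖ ^ 2)
    (hκ : ∀ x, ⟪x, P (A x)⟫ + ⟪A x, P x⟫ ≤ -κ * ⟪x, P x⟫) (ht : 0 ≤ t) :
    ‖NormedSpace.exp (t • A)‖ ≤ √(β / α) * Real.exp (-κ * t / 2) := by
  refine ContinuousLinearMap.opNorm_le_bound _ (by positivity) fun x ↦ ?_
  have solution (s : ℝ) : HasDerivAt (fun s : ℝ ↦ NormedSpace.exp (s • A) x)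
      (A (NormedSpace.exp (s • A) x)) s :=
    (hasDerivAt_exp_smul_const' (𝕂 := ℝ) A s).clm_apply (hasDerivAt_const s x) |>.congr_deriv
      (by simp)
  simpa using norm_le_sqrt_mul_exp_of_lyapunov solution hα₀ hα hβ hκ ht

end Lyapunov

section Matrix

open scoped Matrix.Norms.L2Operator

theorem norm_entry_le_l2_opNorm {𝕜 m n : Type*} [RCLike 𝕜] [Fintype m] [Fintype n] [DecidableEq n]
    (M : Matrix m n 𝕜) (i : m) (j : n) : ‖M i j‖ ≤ ‖M‖ := by
  have column := M.l2_opNorm_mulVec (EuclideanSpace.single j 1)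
  simpa using (PiLp.norm_apply_le _ i).trans column

variable {n : Type*} [Fintype n] [DecidableEq n]

theorem toEuclideanCLM_exp {𝕜 : Type*} [RCLike 𝕜] (M : Matrix n n 𝕜) :
    toEuclideanCLM (n := n) (𝕜 := 𝕜) (NormedSpace.exp M)
      = NormedSpace.exp (toEuclideanCLM (n := n) (𝕜 := 𝕜) M) := by
  let : NormedAlgebra ℚ (Matrix n n 𝕜) := .restrictScalars ℚ 𝕜 _
  exact NormedSpace.map_exp _
    (AddMonoidHomClass.isometry_of_norm _ Matrix.l2_opNorm_toEuclideanCLM).continuous M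

theorem l2_opNorm_exp_smul_le_of_lyapunov {A P : Matrix n n ℝ} {α β κ t : ℝ} (hα₀ : 0 < α)
    (hα : ∀ x, α * (x ⬝ᵥ x) ≤ x ⬝ᵥ P *ᵥ x) (hβ : ∀ x, x ⬝ᵥ P *ᵥ x ≤ β * (x ⬝ᵥ x))
    (hκ : ∀ x, x ⬝ᵥ (P * A + Aᵀ * P) *ᵥ x ≤ -κ * (x ⬝ᵥ P *ᵥ x)) (ht : 0 ≤ t) :
    ‖NormedSpace.exp (t • A)‖ ≤ √(β / α) * Real.exp (-κ * t / 2) := by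
  have norm_sq (x : EuclideanSpace ℝ n) : ‖x‖ ^ 2 = x.ofLp ⬝ᵥ x.ofLp := by
    rw [EuclideanSpace.real_norm_sq_eq]
    simp only [dotProduct, sq]
  rw [← l2_opNorm_toEuclideanCLM, toEuclideanCLM_exp, map_smul]
  refine norm_exp_smul_le_of_lyapunov (P := toEuclideanCLM (n := n) (𝕜 := ℝ) P) hα₀
    (fun x ↦ ?_) (fun x ↦ ?_) (fun x ↦ ?_) ht
  · simpa only [norm_sq, inner_toEuclideanCLM] using hα x
  · simpa only [norm_sq, inner_toEuclideanCLM] using hβ x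
  · simpa [inner_toEuclideanCLM, add_mulVec, dotProduct_add, ← mulVec_mulVec,
      dotProduct_mulVec, vecMul_transpose] using hκ x

end Matrix

/-- The matrix of the energy `x² + y² - 2 b x y`, `b = r / (2 (1 + r²))`, serving as a Lyapunov
function for `du/dt = A(r) u`. The weight `b` is of order `r` at low and `1 / r` at high frequency,
so that the dissipation `r b` it produces in `x` has the size of `r² / (1 + r²)`. -/
noncomputable def lyapunovMatrix (r : ℝ) : Matrix (Fin 2) (Fin 2) ℝ :=
  !![1, -(r / (2 * (1 + r ^ 2))); -(r / (2 * (1 + r ^ 2))), 1]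

theorem dotProduct_lyapunovMatrix_mulVec (r : ℝ) (x : Fin 2 → ℝ) :
    x ⬝ᵥ lyapunovMatrix r *ᵥ x = x 0 ^ 2 + x 1 ^ 2 - r / (1 + r ^ 2) * (x 0 * x 1) := by
  simp only [lyapunovMatrix, vec2_dotProduct, mulVec, of_apply, cons_val_zero, cons_val_one]
  field_simp
  ring

theorem abs_div_one_add_sq_mul_le (r a b : ℝ) :
    |r / (1 + r ^ 2) * (a * b)| ≤ (a ^ 2 + b ^ 2) / 4 := by
  have abs_div_le : |r / (1 + r ^ 2)| ≤ 1 / 2 := by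
    rw [abs_div, abs_of_pos (by positivity : 0 < 1 + r ^ 2), div_le_iff₀ (by positivity)]
    linarith [two_mul_le_add_sq 1 |r|, sq_abs r]
  have abs_mul_le : |a * b| ≤ (a ^ 2 + b ^ 2) / 2 := by
    rw [abs_mul]
    linarith [two_mul_le_add_sq |a| |b|, sq_abs a, sq_abs b]
  rw [abs_mul]
  calc |r / (1 + r ^ 2)| * |a * b| ≤ 1 / 2 * ((a ^ 2 + b ^ 2) / 2) := by gcongr
    _ = (a ^ 2 + b ^ 2) / 4 := by ring

theorem le_dotProduct_lyapunovMatrix_mulVec (r : ℝ) (x : Fin 2 → ℝ) :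
    3 / 4 * (x ⬝ᵥ x) ≤ x ⬝ᵥ lyapunovMatrix r *ᵥ x := by
  rw [dotProduct_lyapunovMatrix_mulVec, vec2_dotProduct]
  linarith [le_of_abs_le (abs_div_one_add_sq_mul_le r (x 0) (x 1))]

theorem dotProduct_lyapunovMatrix_mulVec_le (r : ℝ) (x : Fin 2 → ℝ) :
    x ⬝ᵥ lyapunovMatrix r *ᵥ x ≤ 5 / 4 * (x ⬝ᵥ x) := by
  rw [dotProduct_lyapunovMatrix_mulVec, vec2_dotProduct]
  linarith [neg_le_of_abs_le (abs_div_one_add_sq_mul_le r (x 0) (x 1))]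

theorem dotProduct_lyapunovMatrix_mul_Amat_mulVec (r : ℝ) (x : Fin 2 → ℝ) :
    x ⬝ᵥ (lyapunovMatrix r * Amat r + (Amat r)ᵀ * lyapunovMatrix r) *ᵥ x
      = -(r ^ 2 / (1 + r ^ 2)) * x 0 ^ 2 - (2 - r ^ 2 / (1 + r ^ 2)) * x 1 ^ 2
        + r / (1 + r ^ 2) * (x 0 * x 1) := by
  simp only [lyapunovMatrix, Amat, vec2_dotProduct, mulVec, Matrix.add_apply, mul_apply,
    transpose_apply, Fin.sum_univ_two, of_apply, cons_val_zero, cons_val_one]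
  field_simp
  ring

theorem dotProduct_lyapunovMatrix_mul_Amat_mulVec_le (r : ℝ) (x : Fin 2 → ℝ) :
    x ⬝ᵥ (lyapunovMatrix r * Amat r + (Amat r)ᵀ * lyapunovMatrix r) *ᵥ x
      ≤ -(r ^ 2 / (2 * (1 + r ^ 2))) * (x ⬝ᵥ lyapunovMatrix r *ᵥ x) := by
  rw [dotProduct_lyapunovMatrix_mul_Amat_mulVec, dotProduct_lyapunovMatrix_mulVec]
  obtain ⟨σ, hσ⟩ : ∃ σ, σ = 1 / (2 * (1 + r ^ 2)) := ⟨_, rfl⟩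
  have σ_nonneg : 0 ≤ σ := by rw [hσ]; positivity
  have σ_le : σ ≤ 1 / 2 := by
    rw [hσ]
    gcongr
    linarith [sq_nonneg r]
  have r_sq_mul : r ^ 2 * σ = 1 / 2 - σ := by rw [hσ]; field_simp; ring
  have weight : r / (1 + r ^ 2) = 2 * (r * σ) := by rw [hσ]; field_simp
  have rate : r ^ 2 / (1 + r ^ 2) = 1 - 2 * σ := by rw [hσ]; field_simp; ring
  have rate_half : r ^ 2 / (2 * (1 + r ^ 2)) = 1 / 2 - σ := by rw [hσ]; field_simp; ring
  rw [weight, rate, rate_half]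
  have coeff_nonneg : 0 ≤ 1 / 2 + 3 * σ - σ * (1 / 2 + σ) ^ 2 := by
    have : (1 / 2 + σ) ^ 2 ≤ 1 := pow_le_one₀ (by positivity) (by linarith)
    linarith [mul_le_mul_of_nonneg_left this σ_nonneg]
  -- With `r² σ = 1 / 2 - σ`, completing the square in `r x₀` leaves a multiple of `x₁²`.
  linear_combination σ * sq_nonneg (r * x 0 - (1 / 2 + σ) * x 1)
    + x 1 ^ 2 * coeff_nonneg + x 0 ^ 2 * r_sq_mul

open scoped Matrix.Norms.L2Operator in
theorem l2_opNorm_exp_smul_Amat_le (r : ℝ) {t : ℝ} (ht : 0 ≤ t) :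
    ‖NormedSpace.exp (t • Amat r)‖
      ≤ √(5 / 3) * Real.exp (-(1 / 4) * (r ^ 2 / (1 + r ^ 2)) * t) := by
  have lyapunov := l2_opNorm_exp_smul_le_of_lyapunov (by norm_num)
    (le_dotProduct_lyapunovMatrix_mulVec r) (dotProduct_lyapunovMatrix_mulVec_le r)
    (dotProduct_lyapunovMatrix_mul_Amat_mulVec_le r) ht
  have ratio : (5 / 4 / (3 / 4) : ℝ) = 5 / 3 := by norm_num
  have rate : -(r ^ 2 / (2 * (1 + r ^ 2))) * t / 2 = -(1 / 4) * (r ^ 2 / (1 + r ^ 2)) * t := by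
    field_simp
    ring
  rwa [ratio, rate] at lyapunov

theorem stmt4_general :
    ∃ C > (0:ℝ), ∃ c > (0:ℝ), ∀ r t : ℝ, 0 ≤ t → ∀ i j : Fin 2,
      |NormedSpace.exp (t • Amat r) i j| ≤ C * Real.exp (-c * (r ^ 2 / (1 + r ^ 2)) * t) :=
  ⟨√(5 / 3), by positivity, 1 / 4, by positivity, fun r _ ht i j ↦
    (norm_entry_le_l2_opNorm _ i j).trans (l2_opNorm_exp_smul_Amat_le r ht)⟩

theorem one_fifth_le_sq_div_one_add_sq {r : ℝ} (hr : 1 / 2 ≤ r) : 1 / 5 ≤ r ^ 2 / (1 + r ^ 2) := by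
  rw [le_div_iff₀ (by positivity)]
  linarith [pow_le_pow_left₀ (by norm_num) hr 2]

theorem stmt4 :
    ∃ C > (0:ℝ), ∃ c > (0:ℝ), ∀ r : ℝ, 1/2 ≤ r → ∀ t : ℝ, 0 ≤ t →
      ∀ i j : Fin 2, |NormedSpace.exp (t • Amat r) i j| ≤ C * Real.exp (-c * t) := by
  obtain ⟨C, hC, c, hc, decay⟩ := stmt4_general
  refine ⟨C, hC, c * (1 / 5), by positivity, fun r hr t ht i j ↦ (decay r t ht i j).trans ?_⟩
  rw [← neg_mul]
  gcongr C * Real.exp (?_ * t)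
  exact mul_le_mul_of_nonpos_left (one_fifth_le_sq_div_one_add_sq hr) (neg_nonpos.2 hc.le)
end

section
/- For every nonnegative integer k there exists a constant C > 0 with the following property. Let t ≥ 0, M ≥ 0, let F : ℝ³ → ℂ be measurable, and let H ∈ L²(ℝ³). Assume that for almost every ξ with ‖ξ‖ ≤ 1/2 one has |F(ξ)| ≤ M·‖ξ‖^k·e^{−‖ξ‖²·t/4}, and for almost every ξ with ‖ξ‖ > 1/2 one has |F(ξ)| ≤ e^{−t/4}·|H(ξ)|. Then F ∈ L²(ℝ³) and ‖F‖_{L²} ≤ C·(1 + t)^{−3/4 − k/2}·(M + ‖H‖_{L²}). -/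
open MeasureTheory

/-!
In dimension `d`, write `σ` for the power of `‖ξ‖` and put `γ = (σ + d / p) / 2`. On the low
frequencies `‖ξ‖ ≤ R` the factor `exp (-a * t * ‖ξ‖ ^ 2)` is at most
`exp (a * R ^ 2) * exp (-a * (1 + t) * ‖ξ‖ ^ 2)`, so there `F` is dominated by a multiple of
`‖ξ‖ ^ σ * exp (-a * (1 + t) * ‖ξ‖ ^ 2)`. Rescaling `ξ` by `√(1 + t)` turns the `Lᵖ` norm of this
weight into `(1 + t) ^ (-γ)` times a constant; the shift from `t` to `1 + t` is what keeps the bound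
finite at `t = 0`. On the high frequencies `exp (-b * t)` decays faster than any power of `1 + t`.
-/

open Module (finrank)
open scoped ENNReal

theorem exp_neg_mul_le_mul_one_add_rpow_neg {b γ t : ℝ} (hb : 0 < b) (hγ : 0 ≤ γ) (ht : 0 ≤ t) :
    Real.exp (-b * t) ≤ (γ / b) ^ γ * Real.exp b * (1 + t) ^ (-γ) := by
  have ht' : 0 < 1 + t := by linarith
  have hpow : (1 + t) ^ γ ≤ (γ / b) ^ γ * Real.exp (b * (1 + t)) := by
    simpa only [abs_of_pos hb, abs_of_pos ht'] using
      ProbabilityTheory.rpow_abs_le_mul_exp_abs (1 + t) hγ hb.ne'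
  rw [Real.rpow_neg ht'.le, ← div_eq_mul_inv, le_div_iff₀ (by positivity)]
  calc Real.exp (-b * t) * (1 + t) ^ γ
      ≤ Real.exp (-b * t) * ((γ / b) ^ γ * Real.exp (b * (1 + t))) := by gcongr
    _ = (γ / b) ^ γ * Real.exp (-b * t + b * (1 + t)) := by rw [Real.exp_add]; ring
    _ = (γ / b) ^ γ * Real.exp b := by ring_nf

theorem eLpNorm_le_add_of_norm_le_on_compl {α G G₁ G₂ : Type*} [MeasurableSpace α]
    [NormedAddCommGroup G] [NormedAddCommGroup G₁] [NormedAddCommGroup G₂] {μ : Measure α}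
    {p : ℝ≥0∞} (hp : 1 ≤ p) {s : Set α} {f : α → G} {g : α → G₁} {h : α → G₂}
    (hg : AEStronglyMeasurable g μ) (hh : AEStronglyMeasurable h μ)
    (hfg : ∀ᵐ x ∂μ, x ∈ s → ‖f x‖ ≤ ‖g x‖) (hfh : ∀ᵐ x ∂μ, x ∉ s → ‖f x‖ ≤ ‖h x‖) :
    eLpNorm f p μ ≤ eLpNorm g p μ + eLpNorm h p μ := by
  have hf : ∀ᵐ x ∂μ, ‖f x‖ ≤ ((‖g ·‖) + (‖h ·‖)) x := by
    filter_upwards [hfg, hfh] with x hxg hxh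
    by_cases hx : x ∈ s
    · exact (hxg hx).trans (le_add_of_nonneg_right (norm_nonneg _))
    · exact (hxh hx).trans (le_add_of_nonneg_left (norm_nonneg _))
  calc eLpNorm f p μ
      ≤ eLpNorm ((‖g ·‖) + (‖h ·‖)) p μ := eLpNorm_mono_ae_real hf
    _ ≤ eLpNorm (‖g ·‖) p μ + eLpNorm (‖h ·‖) p μ := eLpNorm_add_le hg.norm hh.norm hp
    _ = eLpNorm g p μ + eLpNorm h p μ := by rw [eLpNorm_norm, eLpNorm_norm]

theorem eLpNorm_comp_const_smul {E G : Type*} [NormedAddCommGroup E] [NormedSpace ℝ E]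
    [FiniteDimensional ℝ E] [MeasurableSpace E] [BorelSpace E] [NormedAddCommGroup G]
    (μ : Measure E) [μ.IsAddHaarMeasure] {p : ℝ≥0∞} (hp : p ≠ ∞) (f : E → G) {c : ℝ} (hc : 0 < c) :
    eLpNorm (fun x => f (c • x)) p μ =
      ENNReal.ofReal (c ^ (-(finrank ℝ E / p.toReal))) * eLpNorm f p μ := by
  have hemb : MeasurableEmbedding (fun x : E => c • x) :=
    (Homeomorph.smulOfNeZero c hc.ne').measurableEmbedding
  have hexp : ((c ^ finrank ℝ E)⁻¹) ^ (1 / p).toReal = c ^ (-(finrank ℝ E / p.toReal)) := by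
    rw [← Real.rpow_natCast, ← Real.rpow_neg hc.le, ← Real.rpow_mul hc.le, ENNReal.toReal_div,
      ENNReal.toReal_one, neg_mul, mul_one_div]
  calc eLpNorm (fun x => f (c • x)) p μ
      = eLpNorm f p (μ.map (c • ·)) := hemb.eLpNorm_map_measure.symm
    _ = ENNReal.ofReal (c ^ (-(finrank ℝ E / p.toReal))) * eLpNorm f p μ := by
      rw [Measure.map_addHaar_smul μ hc.ne', eLpNorm_smul_measure_of_ne_top hp, smul_eq_mul,
        abs_of_pos (by positivity), ENNReal.ofReal_rpow_of_pos (by positivity), hexp]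

/-- The Gaussian weight `‖x‖ ^ σ * exp (-a * ‖x‖ ^ 2)`, i.e. the modulus of the symbol of a
derivative of order `σ` of the heat flow at time `a`. It is the low-frequency envelope of `F`. For
`σ < 0` the singularity at the origin is replaced by the value `0` that `Real.rpow` gives. -/
noncomputable def gaussianWeight {E : Type*} [NormedAddCommGroup E] (σ a : ℝ) (x : E) : ℝ :=
  ‖x‖ ^ σ * Real.exp (-a * ‖x‖ ^ 2)

namespace gaussianWeight

variable {E : Type*} [NormedAddCommGroup E] {σ a : ℝ}

theorem nonneg (σ a : ℝ) (x : E) : 0 ≤ gaussianWeight σ a x := by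
  unfold gaussianWeight
  positivity

theorem rpow_eq (σ a q : ℝ) (x : E) :
    gaussianWeight σ a x ^ q = gaussianWeight (σ * q) (a * q) x := by
  rw [gaussianWeight, gaussianWeight, Real.mul_rpow (by positivity) (by positivity),
    ← Real.rpow_mul (norm_nonneg x), ← Real.exp_mul]
  ring_nf

theorem le_exp_mul_add_of_norm_le {b R : ℝ} (hb : 0 ≤ b) (σ a : ℝ) {x : E} (hx : ‖x‖ ≤ R) :
    gaussianWeight σ a x ≤ Real.exp (b * R ^ 2) * gaussianWeight σ (b + a) x := by
  have hexp : -a * ‖x‖ ^ 2 ≤ b * R ^ 2 + -(b + a) * ‖x‖ ^ 2 := by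
    have : b * ‖x‖ ^ 2 ≤ b * R ^ 2 := by gcongr
    linarith
  calc gaussianWeight σ a x
      ≤ ‖x‖ ^ σ * Real.exp (b * R ^ 2 + -(b + a) * ‖x‖ ^ 2) := by
        unfold gaussianWeight
        gcongr
    _ = Real.exp (b * R ^ 2) * gaussianWeight σ (b + a) x := by
        rw [Real.exp_add, gaussianWeight]
        ring

theorem smul_eq [NormedSpace ℝ E] {c : ℝ} (hc : 0 ≤ c) (σ a : ℝ) (x : E) :
    gaussianWeight σ a (c • x) = c ^ σ * gaussianWeight σ (a * c ^ 2) x := by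
  rw [gaussianWeight, gaussianWeight, norm_smul, Real.norm_of_nonneg hc,
    Real.mul_rpow hc (norm_nonneg x)]
  ring_nf

variable [MeasurableSpace E] [BorelSpace E]

theorem measurable (σ a : ℝ) : Measurable (gaussianWeight σ a : E → ℝ) := by
  unfold gaussianWeight
  fun_prop

variable [NormedSpace ℝ E] [FiniteDimensional ℝ E] (μ : Measure E) [μ.IsAddHaarMeasure]

theorem integrable (ha : 0 < a) (hσ : 0 < σ + finrank ℝ E) :
    Integrable (gaussianWeight σ a) μ := by
  rcases subsingleton_or_nontrivial E with _ | _
  · exact .of_finite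
  have hdim : ((finrank ℝ E - 1 : ℕ) : ℝ) = finrank ℝ E - 1 :=
    Nat.cast_pred Module.finrank_pos
  refine (integrable_fun_norm_addHaar μ
    (f := fun r : ℝ => r ^ σ * Real.exp (-a * r ^ 2))).2 ?_
  refine (integrableOn_rpow_mul_exp_neg_mul_sq ha
    (s := (finrank ℝ E - 1 : ℕ) + σ) (by linarith)).congr_fun ?_ measurableSet_Ioi
  intro r hr
  simp only [Real.rpow_add hr, Real.rpow_natCast, mul_assoc, smul_eq_mul]

theorem memLp {p : ℝ≥0∞} (hp₀ : p ≠ 0) (hp : p ≠ ∞) (ha : 0 < a)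
    (hσ : 0 < σ + finrank ℝ E / p.toReal) : MemLp (gaussianWeight σ a) p μ := by
  have hq : 0 < p.toReal := ENNReal.toReal_pos hp₀ hp
  rw [← integrable_norm_rpow_iff (measurable σ a).aestronglyMeasurable hp₀ hp]
  simp_rw [Real.norm_of_nonneg (nonneg σ a _), rpow_eq]
  refine integrable μ (by positivity) ?_
  have := mul_pos hσ hq
  rwa [add_mul, div_mul_cancel₀ _ hq.ne'] at this

theorem eLpNorm_mul_right {p : ℝ≥0∞} (hp : p ≠ ∞) (σ a : ℝ) {c : ℝ} (hc : 0 < c) :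
    eLpNorm (gaussianWeight σ (a * c)) p μ =
      ENNReal.ofReal (c ^ (-((σ + finrank ℝ E / p.toReal) / 2))) *
        eLpNorm (gaussianWeight σ a) p μ := by
  have hsqrt : 0 < √c := Real.sqrt_pos.2 hc
  have hscale : gaussianWeight σ (a * c) =
      (√c ^ (-σ)) • fun x : E => gaussianWeight σ a (√c • x) := by
    ext x
    rw [Pi.smul_apply, smul_eq hsqrt.le, Real.sq_sqrt hc.le, smul_eq_mul, ← mul_assoc,
      ← Real.rpow_add hsqrt, neg_add_cancel, Real.rpow_zero, one_mul]
  have hexp : √c ^ (-σ) * √c ^ (-(finrank ℝ E / p.toReal)) =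
      c ^ (-((σ + finrank ℝ E / p.toReal) / 2)) := by
    rw [← Real.rpow_add hsqrt, Real.sqrt_eq_rpow, ← Real.rpow_mul hc.le]
    ring_nf
  rw [hscale, eLpNorm_const_smul, eLpNorm_comp_const_smul μ hp _ hsqrt,
    Real.enorm_of_nonneg (by positivity), ← mul_assoc, ← ENNReal.ofReal_mul (by positivity), hexp]

end gaussianWeight

section Synthesis

variable {E G G' : Type*} [NormedAddCommGroup E] [NormedSpace ℝ E] [FiniteDimensional ℝ E]
  [MeasurableSpace E] [BorelSpace E] [NormedAddCommGroup G] [NormedAddCommGroup G']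
  (μ : Measure E) [μ.IsAddHaarMeasure] {p : ℝ≥0∞} {σ a b : ℝ}

theorem eLpNorm_le_of_low_high_frequency_bound (hp₁ : 1 ≤ p) (hp : p ≠ ∞) (ha : 0 ≤ a)
    {R t M B : ℝ} (ht : 0 ≤ t) (hM : 0 ≤ M) (hB : 0 ≤ B) {F : E → G} {H : E → G'}
    (hH : AEStronglyMeasurable H μ)
    (hlow : ∀ᵐ ξ ∂μ, ‖ξ‖ ≤ R → ‖F ξ‖ ≤ M * gaussianWeight σ (a * t) ξ)
    (hhigh : ∀ᵐ ξ ∂μ, R < ‖ξ‖ → ‖F ξ‖ ≤ B * ‖H ξ‖) :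
    eLpNorm F p μ ≤
      ENNReal.ofReal (M * Real.exp (a * R ^ 2) *
        (1 + t) ^ (-((σ + finrank ℝ E / p.toReal) / 2))) * eLpNorm (gaussianWeight σ a) p μ +
      ENNReal.ofReal B * eLpNorm H p μ := by
  set A := M * Real.exp (a * R ^ 2)
  have hA : 0 ≤ A := by positivity
  have hlow' : ∀ᵐ ξ ∂μ, ξ ∈ Metric.closedBall 0 R →
      ‖F ξ‖ ≤ ‖(A • gaussianWeight σ (a * (1 + t))) ξ‖ := by
    filter_upwards [hlow] with ξ hF hξ
    rw [mem_closedBall_zero_iff] at hξ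
    calc ‖F ξ‖
        ≤ M * gaussianWeight σ (a * t) ξ := hF hξ
      _ ≤ M * (Real.exp (a * R ^ 2) * gaussianWeight σ (a * (1 + t)) ξ) := by
        rw [mul_one_add]
        gcongr
        exact gaussianWeight.le_exp_mul_add_of_norm_le ha σ (a * t) hξ
      _ = (A • gaussianWeight σ (a * (1 + t))) ξ := (mul_assoc _ _ _).symm
      _ ≤ ‖(A • gaussianWeight σ (a * (1 + t))) ξ‖ := Real.le_norm_self _
  have hhigh' : ∀ᵐ ξ ∂μ, ξ ∉ Metric.closedBall 0 R → ‖F ξ‖ ≤ ‖(B • (‖H ·‖)) ξ‖ := by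
    filter_upwards [hhigh] with ξ hF hξ
    rw [mem_closedBall_zero_iff, not_le] at hξ
    exact (hF hξ).trans (Real.le_norm_self _)
  calc eLpNorm F p μ
      ≤ eLpNorm (A • gaussianWeight σ (a * (1 + t))) p μ + eLpNorm (B • (‖H ·‖)) p μ :=
        eLpNorm_le_add_of_norm_le_on_compl hp₁
          ((gaussianWeight.measurable _ _).const_smul A).aestronglyMeasurable
          (hH.norm.const_smul _) hlow' hhigh'
    _ = _ := by
        rw [eLpNorm_const_smul, eLpNorm_const_smul, eLpNorm_norm,
          gaussianWeight.eLpNorm_mul_right μ hp σ a (by linarith), Real.enorm_of_nonneg hA,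
          Real.enorm_of_nonneg hB, ENNReal.ofReal_mul hA, mul_assoc]

theorem eLpNorm_le_one_add_rpow_neg_mul (hp₁ : 1 ≤ p) (hp : p ≠ ∞) (ha : 0 ≤ a) (hb : 0 < b)
    (hσ : 0 ≤ σ + finrank ℝ E / p.toReal) {R t M : ℝ} (ht : 0 ≤ t) (hM : 0 ≤ M)
    {F : E → G} {H : E → G'} (hH : AEStronglyMeasurable H μ)
    (hlow : ∀ᵐ ξ ∂μ, ‖ξ‖ ≤ R → ‖F ξ‖ ≤ M * gaussianWeight σ (a * t) ξ)
    (hhigh : ∀ᵐ ξ ∂μ, R < ‖ξ‖ → ‖F ξ‖ ≤ Real.exp (-b * t) * ‖H ξ‖)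
    {γ : ℝ} (hγ : γ = (σ + finrank ℝ E / p.toReal) / 2) :
    eLpNorm F p μ ≤ ENNReal.ofReal ((1 + t) ^ (-γ)) *
      (ENNReal.ofReal (Real.exp (a * R ^ 2)) * eLpNorm (gaussianWeight σ a) p μ *
          ENNReal.ofReal M +
        ENNReal.ofReal ((γ / b) ^ γ * Real.exp b) * eLpNorm H p μ) := by
  have hγ₀ : 0 ≤ γ := by rw [hγ]; positivity
  have hdecay : Real.exp (-b * t) ≤ (γ / b) ^ γ * Real.exp b * (1 + t) ^ (-γ) :=
    exp_neg_mul_le_mul_one_add_rpow_neg hb hγ₀ ht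
  calc eLpNorm F p μ
      ≤ ENNReal.ofReal (M * Real.exp (a * R ^ 2) * (1 + t) ^ (-γ)) *
            eLpNorm (gaussianWeight σ a) p μ +
          ENNReal.ofReal (Real.exp (-b * t)) * eLpNorm H p μ := by
        rw [hγ]
        exact eLpNorm_le_of_low_high_frequency_bound μ hp₁ hp ha ht hM (Real.exp_pos _).le hH
          hlow hhigh
    _ ≤ ENNReal.ofReal (M * Real.exp (a * R ^ 2) * (1 + t) ^ (-γ)) *
            eLpNorm (gaussianWeight σ a) p μ +
          ENNReal.ofReal ((γ / b) ^ γ * Real.exp b * (1 + t) ^ (-γ)) * eLpNorm H p μ := by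
        gcongr
    _ = _ := by
        rw [ENNReal.ofReal_mul (by positivity), ENNReal.ofReal_mul hM,
          ENNReal.ofReal_mul (p := (γ / b) ^ γ * Real.exp b) (by positivity)]
        ring

theorem stmt10_general (hp₁ : 1 ≤ p) (hp : p ≠ ∞) (ha : 0 < a) (hb : 0 < b)
    (hσ : 0 < σ + finrank ℝ E / p.toReal) (R : ℝ) :
    ∃ C > (0 : ℝ), ∀ (t M : ℝ), 0 ≤ t → 0 ≤ M →
      ∀ (F : E → G) (H : E → G'), AEStronglyMeasurable F μ → MemLp H p μ →
        (∀ᵐ ξ ∂μ, ‖ξ‖ ≤ R → ‖F ξ‖ ≤ M * gaussianWeight σ (a * t) ξ) →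
        (∀ᵐ ξ ∂μ, R < ‖ξ‖ → ‖F ξ‖ ≤ Real.exp (-b * t) * ‖H ξ‖) →
        MemLp F p μ ∧
        eLpNorm F p μ ≤
          ENNReal.ofReal (C * (1 + t) ^ (-((σ + finrank ℝ E / p.toReal) / 2)) *
            (M + (eLpNorm H p μ).toReal)) := by
  set γ := (σ + finrank ℝ E / p.toReal) / 2 with hγ
  set K := ENNReal.ofReal (Real.exp (a * R ^ 2)) * eLpNorm (gaussianWeight σ a : E → ℝ) p μ
  set L := ENNReal.ofReal ((γ / b) ^ γ * Real.exp b)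
  have hK : K ≠ ∞ := ENNReal.mul_ne_top ENNReal.ofReal_ne_top
    (gaussianWeight.memLp μ (one_pos.trans_le hp₁).ne' hp ha hσ).eLpNorm_ne_top
  have hL : 0 < L := ENNReal.ofReal_pos.2 (by positivity)
  have hKL : K + L ≠ ∞ := ENNReal.add_ne_top.2 ⟨hK, ENNReal.ofReal_ne_top⟩
  refine ⟨(K + L).toReal, ENNReal.toReal_pos (hL.trans_le le_add_self).ne' hKL,
    fun t M ht hM F H hF hH hlow hhigh => ?_⟩
  have hbound : eLpNorm F p μ ≤ ENNReal.ofReal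
      ((K + L).toReal * (1 + t) ^ (-γ) * (M + (eLpNorm H p μ).toReal)) :=
    calc eLpNorm F p μ
        ≤ ENNReal.ofReal ((1 + t) ^ (-γ)) * (K * ENNReal.ofReal M + L * eLpNorm H p μ) :=
          eLpNorm_le_one_add_rpow_neg_mul μ hp₁ hp ha.le hb hσ.le ht hM hH.1 hlow hhigh hγ
      _ ≤ ENNReal.ofReal ((1 + t) ^ (-γ)) *
            ((K + L) * ENNReal.ofReal M + (K + L) * eLpNorm H p μ) := by
          gcongr
          exacts [le_self_add, le_add_self]
      _ = _ := by
          rw [ENNReal.ofReal_mul (by positivity), ENNReal.ofReal_mul (by positivity),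
            ENNReal.ofReal_add hM (by positivity), ENNReal.ofReal_toReal hKL,
            ENNReal.ofReal_toReal hH.eLpNorm_ne_top]
          ring
  exact ⟨⟨hF, hbound.trans_lt ENNReal.ofReal_lt_top⟩, hbound⟩

end Synthesis

theorem stmt10 (k : ℕ) :
    ∃ C > (0:ℝ), ∀ (t M : ℝ), 0 ≤ t → 0 ≤ M →
      ∀ (F H : EuclideanSpace ℝ (Fin 3) → ℂ), Measurable F → MemLp H 2 volume →
        (∀ᵐ ξ ∂(volume : Measure (EuclideanSpace ℝ (Fin 3))),
          ‖ξ‖ ≤ 1/2 → ‖F ξ‖ ≤ M * ‖ξ‖ ^ k * Real.exp (-‖ξ‖ ^ 2 * t / 4)) →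
        (∀ᵐ ξ ∂(volume : Measure (EuclideanSpace ℝ (Fin 3))),
          1/2 < ‖ξ‖ → ‖F ξ‖ ≤ Real.exp (-t / 4) * ‖H ξ‖) →
        MemLp F 2 volume ∧
        eLpNorm F 2 volume ≤
          ENNReal.ofReal (C * (1 + t) ^ (-(3/4) - (k : ℝ)/2) *
            (M + (eLpNorm H 2 volume).toReal)) := by
  obtain ⟨C, hC, h⟩ := stmt10_general (G := ℂ) (G' := ℂ)
    (volume : Measure (EuclideanSpace ℝ (Fin 3))) (p := 2) (σ := k) (a := 4⁻¹) (b := 4⁻¹)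
    one_le_two ENNReal.ofNat_ne_top (by positivity) (by positivity)
    (by rw [finrank_euclideanSpace_fin, ENNReal.toReal_ofNat]; positivity) 2⁻¹
  refine ⟨C, hC, fun t M ht hM F H hF hH hlow hhigh => ?_⟩
  have hexp : -(3/4) - (k : ℝ)/2 = -((k + 3 / 2) / 2) := by ring
  simpa [hexp] using h t M ht hM F H hF.aestronglyMeasurable hH
    (by simpa [gaussianWeight, mul_assoc, div_eq_mul_inv, mul_comm, mul_left_comm] using hlow)
    (by simpa [div_eq_mul_inv, mul_comm] using hhigh)
end
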